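/- arXiv:math/0512520 — 2 statements merged into one kernel-verified Lean document; each statement's English description precedes it below -/
import Mathlib

section
/- Let z ∈ k[X] satisfy d(z) = 0 and e(z) = w·z for a natural number w, and for 0 ≤ i ≤ w set v_i := ((w−i)!/(i!·w!))·d̂^i(z) (a rational multiple, which makes sense since char k = 0). Then d(v_0) = 0 and d(v_i) = v_{i−1} for every 1 ≤ i ≤ w; that is, the span of v_0,…,v_m (m ≤ w) is a d-module on which d acts exactly as on the span of x_0,…,x_m. -/
open MvPolynomial Finset

/-- The Weitzenböck derivation `d` on `k[x_0,…,x_n]`: `d(x_i) = x_{i-1}` for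
`1 ≤ i ≤ n` and `d(x_0) = 0`. -/
noncomputable def weitz (k : Type*) [Field k] [CharZero k] (n : ℕ) :
    Derivation k (MvPolynomial (Fin (n + 1)) k) (MvPolynomial (Fin (n + 1)) k) :=
  mkDerivation k (fun i : Fin (n + 1) =>
    if _ : (i : ℕ) = 0 then 0
    else X (⟨(i : ℕ) - 1, by have := i.isLt; omega⟩ : Fin (n + 1)))

/-- The derivation `d̂` on `k[x_0,…,x_n]`: `d̂(x_i) = (i+1)(n−i)·x_{i+1}` for
`0 ≤ i ≤ n−1` and `d̂(x_n) = 0`. -/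
noncomputable def dhat (k : Type*) [Field k] [CharZero k] (n : ℕ) :
    Derivation k (MvPolynomial (Fin (n + 1)) k) (MvPolynomial (Fin (n + 1)) k) :=
  mkDerivation k (fun i : Fin (n + 1) =>
    if h : (i : ℕ) = n then 0
    else ((((i : ℕ) + 1) * (n - (i : ℕ)) : ℕ) : k) •
      X (⟨(i : ℕ) + 1, by have := i.isLt; omega⟩ : Fin (n + 1)))

/-- The derivation `e` on `k[x_0,…,x_n]`: `e(x_i) = (n−2i)·x_i`. -/
noncomputable def ee (k : Type*) [Field k] [CharZero k] (n : ℕ) :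
    Derivation k (MvPolynomial (Fin (n + 1)) k) (MvPolynomial (Fin (n + 1)) k) :=
  mkDerivation k (fun i : Fin (n + 1) => ((n : ℤ) - 2 * (i : ℕ)) • X i)

theorem weitz_dhat_bracket (k : Type*) [Field k] [CharZero k] (n : ℕ) :
    ⁅weitz k n, dhat k n⁆ = ee k n := by
  apply MvPolynomial.derivation_ext
  intro i
  have hi := i.isLt
  rw [Derivation.commutator_apply]
  simp only [weitz, dhat, ee, mkDerivation_X]
  have key : ∀ (a : k), (((n : ℤ) - 2 * ((i : ℕ) : ℤ)) • (X i : MvPolynomial (Fin (n + 1)) k))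
      = ((n : k) - 2 * ((i : ℕ) : k)) • X i := by
    intro a
    rw [← Int.cast_smul_eq_zsmul k]
    push_cast
    rfl
  rw [key 0]
  by_cases h0 : (i : ℕ) = 0 <;> by_cases hn : (i : ℕ) = n
  · have : n = 0 := by omega
    simp [h0, hn, this]
  · simp [h0, hn, mkDerivation_X]
    have : (0 : ℕ) ≠ n := by omega
    have hi0 : i = 0 := Fin.ext h0
    simp [this, hi0]
  · have h1 : ¬ ((i : ℕ) - 1 = n) := by omega
    have h2 : (⟨(i : ℕ) - 1 + 1, by omega⟩ : Fin (n + 1)) = i := Fin.ext (by simp; omega)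
    have h3 : ((i : ℕ) - 1 + 1) * (n - ((i : ℕ) - 1)) = n := by
      have : n - ((i : ℕ) - 1) = 1 := by omega
      rw [this]; omega
    rw [dif_pos hn, dif_neg h0, mkDerivation_X, dif_neg h1]
    simp only [h2, h3, map_zero, zero_sub]
    rw [← neg_smul, hn]
    congr 1
    ring
  · have h1 : ¬ ((i : ℕ) - 1 = n) := by omega
    have h2 : (⟨(i : ℕ) - 1 + 1, by omega⟩ : Fin (n + 1)) = i := Fin.ext (by simp; omega)
    rw [dif_neg hn, dif_neg h0, Derivation.map_smul, mkDerivation_X, mkDerivation_X, dif_neg h1,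
      dif_neg (Nat.succ_ne_zero _)]
    simp only [h2, Nat.add_sub_cancel, Fin.eta]
    rw [← sub_smul]
    congr 1
    obtain ⟨j, hj⟩ : ∃ j, (i : ℕ) = j + 1 := ⟨(i : ℕ) - 1, by omega⟩
    obtain ⟨m, hm⟩ : ∃ m, n = j + 1 + m := ⟨n - (j + 1), by omega⟩
    have e1 : n - (j + 1) = m := by omega
    have e2 : n - j = m + 1 := by omega
    rw [hj, Nat.add_sub_cancel, e1, e2, hm]
    push_cast
    ring

theorem ee_dhat_bracket (k : Type*) [Field k] [CharZero k] (n : ℕ) :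
    ⁅ee k n, dhat k n⁆ = (-2 : k) • dhat k n := by
  apply MvPolynomial.derivation_ext
  intro i
  have hi := i.isLt
  rw [Derivation.commutator_apply, Derivation.smul_apply]
  simp only [dhat, ee, mkDerivation_X]
  simp only [← Int.cast_smul_eq_zsmul k]
  by_cases hn : (i : ℕ) = n
  · simp [hn, mkDerivation_X]
  · rw [dif_neg hn, Derivation.map_smul, Derivation.map_smul, mkDerivation_X, mkDerivation_X,
      dif_neg hn]
    simp only [smul_smul, ← sub_smul]
    congr 1
    push_cast
    ring

theorem ee_dhat_iter (k : Type*) [Field k] [CharZero k] (n : ℕ)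
    (z : MvPolynomial (Fin (n + 1)) k) (w : ℕ) (he : ee k n z = (w : k) • z) (i : ℕ) :
    ee k n ((⇑(dhat k n))^[i] z) = ((w : k) - 2 * i) • (⇑(dhat k n))^[i] z := by
  induction i with
  | zero => simpa using he
  | succ i ih =>
    rw [Function.iterate_succ_apply']
    have h := congrArg (fun D => D ((⇑(dhat k n))^[i] z)) (ee_dhat_bracket k n)
    simp only [Derivation.commutator_apply, Derivation.smul_apply] at h
    rw [sub_eq_iff_eq_add.mp h, ih, Derivation.map_smul, ← add_smul]
    congr 1
    push_cast
    ring

theorem weitz_dhat_iter (k : Type*) [Field k] [CharZero k] (n : ℕ)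
    (z : MvPolynomial (Fin (n + 1)) k) (w : ℕ)
    (hd : weitz k n z = 0) (he : ee k n z = (w : k) • z) (i : ℕ) :
    weitz k n ((⇑(dhat k n))^[i + 1] z)
      = (((i : k) + 1) * ((w : k) - i)) • (⇑(dhat k n))^[i] z := by
  have step : ∀ y, weitz k n (dhat k n y) = ee k n y + dhat k n (weitz k n y) := by
    intro y
    have h := congrArg (fun D => D y) (weitz_dhat_bracket k n)
    simp only [Derivation.commutator_apply] at h
    exact sub_eq_iff_eq_add.mp h
  induction i with
  | zero => simp [step, hd, he]
  | succ i ih =>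
    rw [Function.iterate_succ_apply', step, ih, ee_dhat_iter k n z w he, Derivation.map_smul,
      ← Function.iterate_succ_apply' (dhat k n), ← add_smul]
    congr 1
    push_cast
    ring

/-- If `d(z) = 0` and `e(z) = w·z` for a natural number `w`, and
`v_i := ((w−i)!/(i!·w!))·d̂^i(z)`, then `d(v_0) = 0` and `d(v_i) = v_{i−1}` for
`1 ≤ i ≤ w`; so `⟨v_0,…,v_m⟩` is a `d`-module isomorphic to `⟨x_0,…,x_m⟩`. -/
theorem dhat_orbit_is_standard_d_module (k : Type*) [Field k] [CharZero k] (n : ℕ)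
    (z : MvPolynomial (Fin (n + 1)) k) (w : ℕ)
    (hd : weitz k n z = 0) (he : ee k n z = (w : k) • z)
    (v : ℕ → MvPolynomial (Fin (n + 1)) k)
    (hv : ∀ i, v i = (((w - i).factorial : k) / ((i.factorial * w.factorial : ℕ) : k))
      • (⇑(dhat k n))^[i] z) :
    weitz k n (v 0) = 0 ∧ ∀ i, 1 ≤ i → i ≤ w → weitz k n (v i) = v (i - 1) := by
  refine ⟨?_, ?_⟩
  · rw [hv, Derivation.map_smul]
    simp [hd]
  · intro i h1 h2
    obtain ⟨j, rfl⟩ : ∃ j, i = j + 1 := ⟨i - 1, by omega⟩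
    obtain ⟨m, rfl⟩ : ∃ m, w = j + 1 + m := ⟨w - (j + 1), by omega⟩
    rw [hv, hv, Derivation.map_smul, weitz_dhat_iter k n z _ hd he, Nat.add_sub_cancel, smul_smul]
    congr 1
    have e1 : j + 1 + m - (j + 1) = m := by omega
    have e2 : j + 1 + m - j = m + 1 := by omega
    have f1 : (j.factorial : k) ≠ 0 := Nat.cast_ne_zero.mpr j.factorial_ne_zero
    have f2 : ((j + 1 + m).factorial : k) ≠ 0 := Nat.cast_ne_zero.mpr (Nat.factorial_ne_zero _)
    have f3 : (j : k) + 1 ≠ 0 := by exact_mod_cast Nat.succ_ne_zero j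
    rw [e1, e2, Nat.factorial_succ m, Nat.factorial_succ j]
    push_cast
    field_simp
    ring
end

section
/- Let T be a k-subalgebra of k[X] contained in the kernel of the Weitzenböck derivation d, such that x_0 ∈ T and such that for every nonzero homogeneous polynomial z ∈ T with d(z) = 0 that is an e-eigenvector with eigenvalue w ∈ ℕ, and for every 0 ≤ i ≤ min(n, w), the Casimir element τ_i(z) belongs to T. Then T equals the whole kernel of d: T = k[X]^d. -/
open MvPolynomial Finset

/-- The Casimir element `τ_i(z) = Σ_{k=0}^{i} (−1)^k ((w−k)!/(k!·w!)) x_{i−k} d̂^k(z)`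
associated to a kernel element `z` of weight `w`, for `i ≤ n`. -/
noncomputable def tau (k : Type*) [Field k] [CharZero k] (n w i : ℕ) (hi : i ≤ n)
    (z : MvPolynomial (Fin (n + 1)) k) : MvPolynomial (Fin (n + 1)) k :=
  ∑ j ∈ Finset.range (i + 1),
    ((-1 : k) ^ j * ((w - j).factorial : k) / ((j.factorial * w.factorial : ℕ) : k)) •
      (X (⟨i - j, by omega⟩ : Fin (n + 1)) * (⇑(dhat k n))^[j] z)

section abstractSl2
variable {k V : Type*} [Field k] [CharZero k] [AddCommGroup V] [Module k V]

structure Sl2 (D H e : Module.End k V) : Prop where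
  dh : ∀ x, D (H x) = H (D x) + e x
  ed : ∀ x, e (D x) = D (e x) + (2 : k) • D x
  eh : ∀ x, e (H x) = H (e x) - (2 : k) • H x

variable {D H e : Module.End k V}

lemma Sl2.wH (h : Sl2 D H e) {g : V} {u : k} (hg : e g = u • g) (j : ℕ) :
    e ((H ^ j) g) = (u - 2 * j) • (H ^ j) g := by
  induction j with
  | zero => simp [hg]
  | succ j ih =>
    rw [pow_succ', Module.End.mul_apply, h.eh, ih, map_smul, ← sub_smul]
    congr 1; push_cast; ring

lemma Sl2.wD (h : Sl2 D H e) {g : V} {u : k} (hg : e g = u • g) (j : ℕ) :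
    e ((D ^ j) g) = (u + 2 * j) • (D ^ j) g := by
  induction j with
  | zero => simp [hg]
  | succ j ih =>
    rw [pow_succ', Module.End.mul_apply, h.ed, ih, map_smul, ← add_smul]
    congr 1; push_cast; ring

lemma Sl2.DH (h : Sl2 D H e) {g : V} {u : k} (hg : e g = u • g) (j : ℕ) :
    D ((H ^ (j + 1)) g) = (H ^ (j + 1)) (D g) + (((j : k) + 1) * (u - j)) • (H ^ j) g := by
  induction j with
  | zero => simp [h.dh, hg]
  | succ j ih =>
    rw [pow_succ' H (j + 1), Module.End.mul_apply, h.dh, ih, h.wH hg, map_add, map_smul,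
      Module.End.mul_apply, ← Module.End.mul_apply, ← pow_succ', add_assoc,
      ← Module.End.mul_apply H (H ^ j), ← pow_succ', ← add_smul]
    congr 2; push_cast; ring

lemma Sl2.DmH (h : Sl2 D H e) {g : V} {u : k} (hg : e g = u • g) (j : ℕ) :
    (D ^ (j + 1)) (H g) = H ((D ^ (j + 1)) g) + (((j : k) + 1) * (u + j)) • (D ^ j) g := by
  induction j with
  | zero => simp [h.dh, hg]
  | succ j ih =>
    rw [pow_succ' D (j + 1), Module.End.mul_apply, ih, map_add, h.dh, map_smul, h.wD hg,
      Module.End.mul_apply, ← Module.End.mul_apply D (D ^ j), ← pow_succ', add_assoc, ← add_smul]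
    congr 2; push_cast; ring

lemma Sl2.inj (h : Sl2 D H e) (hn : ∀ g, ∃ N : ℕ, (H ^ N) g = 0) (s : ℕ) :
    ∀ (u : ℤ) (g : V), u ≤ -(s : ℤ) → e g = (u : k) • g → (D ^ s) g = 0 → g = 0 := by
  induction s with
  | zero => intro u g _ _ hg; simpa using hg
  | succ s ih =>
    intro u g hu hg hD
    -- H D g = c g
    have key : H (D g) = (((s : ℤ) * (u + s + 1) : ℤ) : k) • g := by
      rw [← sub_eq_zero]
      apply ih u
      · push_cast at hu; omega
      · have h1 : e (D g) = ((u : k) + 2) • D g := by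
          rw [h.ed, hg, map_smul, ← add_smul]
        rw [map_sub, h.eh, h1, map_smul, map_smul, hg, ← sub_smul, smul_sub]
        congr 1
        · congr 1; ring
        · rw [smul_comm]
      · have h1 : e (D g) = ((u : k) + 2) • D g := by
          rw [h.ed, hg, map_smul, ← add_smul]
        cases s with
        | zero => simpa using congrArg H hD
        | succ s =>
          rw [map_sub, h.DmH h1, map_smul]
          have h2 : (D ^ (s + 1)) (D g) = 0 := by
            rw [← Module.End.mul_apply, ← pow_succ]; exact hD
          have h3 : (D ^ s) (D g) = (D ^ (s + 1)) g := by
            rw [← Module.End.mul_apply, ← pow_succ]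
          rw [h2, h3, map_zero, zero_add, ← sub_smul]
          have : ((s : k) + 1) * ((u : k) + 2 + s)
              - (((((s + 1 : ℕ) : ℤ)) * (u + ((s + 1 : ℕ) : ℤ) + 1) : ℤ) : k) = 0 := by
            push_cast; ring
          rw [this, zero_smul]
    by_contra hne
    have hall : ∀ j : ℕ, (H ^ j) g ≠ 0 := by
      intro j
      induction j with
      | zero => simpa using hne
      | succ j ihj =>
        intro h0
        have h1 := h.DH hg j
        rw [h0, map_zero, pow_succ, Module.End.mul_apply, key, map_smul, ← add_smul] at h1
        have h2 := (smul_eq_zero.mp h1.symm).resolve_right ihj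
        have h3 : ((((s : ℤ) * (u + s + 1) + (j + 1) * (u - j)) : ℤ) : k) = 0 := by
          rw [← h2]; push_cast; ring
        have h4 := Int.cast_eq_zero.mp h3
        push_cast at hu
        nlinarith [mul_nonneg (Int.natCast_nonneg s) (by linarith : (0:ℤ) ≤ -(u + s + 1)),
          mul_pos (by positivity : (0:ℤ) < (j:ℤ) + 1) (by linarith [Int.natCast_nonneg s, Int.natCast_nonneg j] : (0:ℤ) < -(u - j))]
    obtain ⟨N, hN⟩ := hn g
    exact hall N hN

lemma Sl2.coef (h : Sl2 D H e) {z : V} (hz : D z = 0) (j l : ℕ) :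
    ∀ v : ℕ, e z = ((j + l + v : ℕ) : k) • z →
    ((j.factorial * v.factorial : ℕ) : k) • (D ^ l) ((H ^ (j + l)) z)
      = (((j + l).factorial * (l + v).factorial : ℕ) : k) • (H ^ j) z := by
  induction l with
  | zero => intro v _; simp
  | succ l ih =>
    intro v hv
    have h1 := ih (v + 1) (by rw [hv]; congr 2; omega)
    rw [pow_succ, Module.End.mul_apply, ← add_assoc, h.DH hv, hz, map_zero, zero_add, map_smul,
      smul_smul]
    have : ((j.factorial * v.factorial : ℕ) : k) * ((((j + l : ℕ) : k) + 1) *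
        (((j + (l + 1) + v : ℕ) : k) - ((j + l : ℕ) : k)))
        = ((j + l + 1 : ℕ) : k) * ((j.factorial * (v + 1).factorial : ℕ) : k) := by
      rw [Nat.factorial_succ v]; push_cast; ring
    rw [this, mul_smul, h1, smul_smul, Nat.factorial_succ (j + l), show l + 1 + v = l + (v + 1) by omega]
    congr 1; push_cast; ring

end abstractSl2

section poly
variable {k : Type*} [Field k] [CharZero k] {n : ℕ}

lemma deriv_sum_apply {ι : Type*} (s : Finset ι)
    (F : ι → Derivation k (MvPolynomial (Fin (n + 1)) k) (MvPolynomial (Fin (n + 1)) k))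
    (f : MvPolynomial (Fin (n + 1)) k) : (∑ i ∈ s, F i) f = ∑ i ∈ s, F i f := by
  classical
  induction s using Finset.induction_on with
  | empty => simp
  | insert a s ha ih => rw [Finset.sum_insert ha, Finset.sum_insert ha, Derivation.add_apply, ih]

lemma deriv_eq_sum (D : Derivation k (MvPolynomial (Fin (n + 1)) k) (MvPolynomial (Fin (n + 1)) k))
    (f : MvPolynomial (Fin (n + 1)) k) : D f = ∑ i, D (X i) * pderiv i f := by
  have : D = ∑ i, D (X i) • pderiv i := by
    apply derivation_ext
    intro j
    rw [deriv_sum_apply, Finset.sum_eq_single j]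
    · simp
    · intro b _ hb
      simp [pderiv_X, Pi.single_apply, hb.symm]
    · simp
  conv_lhs => rw [this]
  rw [deriv_sum_apply]
  simp

/-- bigrading: (degree, index sum). -/
def wt (n : ℕ) : Fin (n + 1) → ℤ × ℤ := fun i => (1, (i : ℤ))

lemma weight_wt (d : Fin (n + 1) →₀ ℕ) :
    Finsupp.weight (wt n) d = (∑ i, (d i : ℤ), ∑ i, (d i : ℤ) * (i : ℤ)) := by
  rw [Finsupp.weight_apply, Finsupp.sum_fintype _ _ (by simp)]
  ext
  · simp [wt, Prod.fst_sum]
  · simp [wt, Prod.snd_sum]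

lemma deriv_wh (D : Derivation k (MvPolynomial (Fin (n + 1)) k) (MvPolynomial (Fin (n + 1)) k))
    (δ : ℤ × ℤ) (hD : ∀ i, IsWeightedHomogeneous (wt n) (D (X i)) (wt n i + δ))
    {f : MvPolynomial (Fin (n + 1)) k} {c : ℤ × ℤ} (hf : IsWeightedHomogeneous (wt n) f c) :
    IsWeightedHomogeneous (wt n) (D f) (c + δ) := by
  rw [deriv_eq_sum]
  apply IsWeightedHomogeneous.sum
  intro i _
  have := (hD i).mul (hf.pderiv (i := i) (n' := c - wt n i) (by abel))
  convert this using 1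
  abel

lemma weitz_X_zero (h : 0 < n + 1) : weitz k n (X ⟨0, h⟩) = 0 := by simp [weitz, mkDerivation_X]

lemma weitz_X_succ (i : ℕ) (h : i + 1 < n + 1) :
    weitz k n (X ⟨i + 1, h⟩) = X ⟨i, by omega⟩ := by simp [weitz, mkDerivation_X]

lemma dhat_X_last : dhat k n (X ⟨n, by omega⟩) = 0 := by simp [dhat, mkDerivation_X]

lemma dhat_X (i : ℕ) (h : i < n) : dhat k n (X ⟨i, by omega⟩)
    = ((((i : ℕ) + 1) * (n - (i : ℕ)) : ℕ) : k) • X ⟨i + 1, by omega⟩ := by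
  rw [dhat, mkDerivation_X, dif_neg (by simp; omega)]

lemma ee_X (i : Fin (n + 1)) : ee k n (X i) = ((n : k) - 2 * ((i : ℕ) : k)) • X i := by
  rw [ee, mkDerivation_X, ← Int.cast_smul_eq_zsmul k]; push_cast; rfl

lemma wh_smul {f : MvPolynomial (Fin (n + 1)) k} {c : ℤ × ℤ} (a : k)
    (hf : IsWeightedHomogeneous (wt n) f c) : IsWeightedHomogeneous (wt n) (a • f) c :=
  (weightedHomogeneousSubmodule k (wt n) c).smul_mem a hf

lemma weitz_wh {f : MvPolynomial (Fin (n + 1)) k} {m s : ℤ}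
    (hf : IsWeightedHomogeneous (wt n) f (m, s)) :
    IsWeightedHomogeneous (wt n) (weitz k n f) (m, s - 1) := by
  have := deriv_wh (weitz k n) (0, -1) (fun i => ?_) hf
  · simpa [sub_eq_add_neg] using this
  · obtain ⟨i, hi⟩ := i
    cases i with
    | zero => rw [weitz_X_zero]; exact isWeightedHomogeneous_zero _ _ _
    | succ i =>
      rw [weitz_X_succ]
      convert isWeightedHomogeneous_X k (wt n) _ using 1
      simp [wt]

lemma dhat_wh {f : MvPolynomial (Fin (n + 1)) k} {m s : ℤ}
    (hf : IsWeightedHomogeneous (wt n) f (m, s)) :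
    IsWeightedHomogeneous (wt n) (dhat k n f) (m, s + 1) := by
  have := deriv_wh (dhat k n) (0, 1) (fun i => ?_) hf
  · simpa using this
  · obtain ⟨i, hi⟩ := i
    by_cases h : i = n
    · subst h; rw [dhat_X_last]; exact isWeightedHomogeneous_zero _ _ _
    · rw [dhat_X i (by omega)]
      apply wh_smul
      convert isWeightedHomogeneous_X k (wt n) _ using 1
      simp [wt]

lemma ee_monomial (d : Fin (n + 1) →₀ ℕ) (a : k) :
    ee k n (monomial d a) = (∑ i, (d i : k) * ((n : k) - 2 * ((i : ℕ) : k))) • monomial d a := by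
  rw [deriv_eq_sum, Finset.sum_smul]
  apply Finset.sum_congr rfl
  intro i _
  rw [ee_X, smul_mul_assoc, X_mul_pderiv_monomial, ← Nat.cast_smul_eq_nsmul k, smul_smul, mul_comm]

lemma ee_wh {f : MvPolynomial (Fin (n + 1)) k} {m s : ℤ}
    (hf : IsWeightedHomogeneous (wt n) f (m, s)) :
    ee k n f = ((n * m - 2 * s : ℤ) : k) • f := by
  conv_lhs => rw [f.as_sum]
  conv_rhs => rw [f.as_sum]
  rw [map_sum, Finset.smul_sum]
  apply Finset.sum_congr rfl
  intro d hd
  rw [ee_monomial]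
  congr 1
  have h := hf (mem_support_iff.mp hd)
  rw [weight_wt, Prod.mk.injEq] at h
  rw [← h.1, ← h.2]
  push_cast
  simp only [mul_sub, Finset.sum_sub_distrib, Finset.mul_sum]
  congr 1
  · exact Finset.sum_congr rfl fun _ _ => by ring
  · exact Finset.sum_congr rfl fun _ _ => by ring

lemma wh_bound {f : MvPolynomial (Fin (n + 1)) k} {m s : ℤ}
    (hf : IsWeightedHomogeneous (wt n) f (m, s)) (h0 : f ≠ 0) : 0 ≤ m ∧ s ≤ n * m := by
  obtain ⟨d, hd⟩ := ne_zero_iff.mp h0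
  have h := hf hd
  rw [weight_wt, Prod.mk.injEq] at h
  rw [← h.1, ← h.2]
  refine ⟨Finset.sum_nonneg fun _ _ => by positivity, ?_⟩
  rw [Finset.mul_sum]
  apply Finset.sum_le_sum
  intro i _
  rw [mul_comm]
  have := i.isLt
  apply mul_le_mul_of_nonneg_right _ (by positivity)
  omega

lemma wh_homog {f : MvPolynomial (Fin (n + 1)) k} {m : ℕ} {s : ℤ}
    (hf : IsWeightedHomogeneous (wt n) f (m, s)) : f.IsHomogeneous m := by
  intro d hd
  have h := hf hd
  rw [weight_wt, Prod.mk.injEq] at h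
  rw [Finsupp.weight_apply, Finsupp.sum_fintype _ _ (by simp)]
  simp only [Pi.one_apply, smul_eq_mul, mul_one]
  exact_mod_cast h.1

lemma weitz_pow_wh {f : MvPolynomial (Fin (n + 1)) k} {m s : ℤ}
    (hf : IsWeightedHomogeneous (wt n) f (m, s)) (j : ℕ) :
    IsWeightedHomogeneous (wt n) (((weitz k n : Module.End k _) ^ j) f) (m, s - j) := by
  induction j with
  | zero => simpa using hf
  | succ j ih =>
    rw [pow_succ', Module.End.mul_apply]
    rw [show s - ((j + 1 : ℕ) : ℤ) = s - j - 1 by push_cast; ring]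
    exact weitz_wh ih

lemma dhat_pow_wh {f : MvPolynomial (Fin (n + 1)) k} {m s : ℤ}
    (hf : IsWeightedHomogeneous (wt n) f (m, s)) (j : ℕ) :
    IsWeightedHomogeneous (wt n) (((dhat k n : Module.End k _) ^ j) f) (m, s + j) := by
  induction j with
  | zero => simpa using hf
  | succ j ih =>
    rw [pow_succ', Module.End.mul_apply]
    rw [show s + ((j + 1 : ℕ) : ℤ) = s + j + 1 by push_cast; ring]
    exact dhat_wh ih

lemma dhat_nilp (g : MvPolynomial (Fin (n + 1)) k) :
    ∃ N : ℕ, ((dhat k n : Module.End k _) ^ N) g = 0 := by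
  induction g using MvPolynomial.monomial_add_induction_on with
  | C a => exact ⟨1, by simp⟩
  | monomial_add d a f _ _ ih =>
    obtain ⟨N, hN⟩ := ih
    have hm := isWeightedHomogeneous_monomial (wt n) d a rfl
    obtain ⟨⟨m, s⟩, hms⟩ : ∃ c, Finsupp.weight (wt n) d = c := ⟨_, rfl⟩
    rw [hms] at hm
    have : ((dhat k n : Module.End k _) ^ ((n * m - s).toNat + 1)) (monomial d a) = 0 := by
      by_contra h0
      have := (wh_bound (dhat_pow_wh hm _) h0).2
      push_cast at this
      omega
    refine ⟨N + ((n * m - s).toNat + 1), ?_⟩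
    rw [map_add, pow_add, Module.End.mul_apply, this, map_zero, zero_add,
      ← pow_add, add_comm N, pow_add, Module.End.mul_apply, hN, map_zero]

lemma sl2_poly : Sl2 (weitz k n : Module.End k (MvPolynomial (Fin (n + 1)) k))
    (dhat k n : Module.End k _) (ee k n : Module.End k _) := by
  refine ⟨fun x => ?_, fun x => ?_, fun x => ?_⟩
  · have : ⁅weitz k n, dhat k n⁆ = ee k n := by
      apply derivation_ext
      rintro ⟨i, hi⟩
      rw [Derivation.commutator_apply, ee_X]
      have h1 : weitz k n (dhat k n (X ⟨i, hi⟩)) = (((i : k) + 1) * (n - i)) • X ⟨i, hi⟩ := by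
        rcases eq_or_ne i n with h | h
        · subst h; rw [dhat_X_last]; simp
        · rw [dhat_X i (by omega), Derivation.map_smul, weitz_X_succ]
          push_cast [show i ≤ n by omega]; rfl
      have h2 : dhat k n (weitz k n (X ⟨i, hi⟩)) = ((i : k) * (n - i + 1)) • X ⟨i, hi⟩ := by
        cases i with
        | zero => rw [weitz_X_zero]; simp
        | succ i =>
          rw [weitz_X_succ, dhat_X i (by omega)]
          congr 1
          push_cast [show i ≤ n by omega]; ring
      rw [h1, h2, ← sub_smul]
      congr 1
      ring
    have h := congrArg (fun D => D x) this
    simp only [Derivation.commutator_apply] at h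
    simpa [sub_eq_iff_eq_add'] using h
  · have : ⁅ee k n, weitz k n⁆ = (2 : k) • weitz k n := by
      apply derivation_ext
      rintro ⟨i, hi⟩
      rw [Derivation.commutator_apply, ee_X, Derivation.smul_apply, Derivation.map_smul]
      cases i with
      | zero => rw [weitz_X_zero]; simp
      | succ i =>
        rw [weitz_X_succ, ee_X, ← sub_smul]
        congr 1
        push_cast; ring
    have h := congrArg (fun D => D x) this
    simp only [Derivation.commutator_apply] at h
    simpa [sub_eq_iff_eq_add'] using h
  · have : ⁅ee k n, dhat k n⁆ = (-2 : k) • dhat k n := by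
      apply derivation_ext
      rintro ⟨i, hi⟩
      rw [Derivation.commutator_apply, ee_X, Derivation.smul_apply, Derivation.map_smul]
      by_cases h : i = n
      · subst h; rw [dhat_X_last]; simp
      · rw [dhat_X i (by omega), Derivation.map_smul, ee_X, smul_smul, smul_smul, smul_smul, ← sub_smul]
        congr 1
        push_cast; ring
    have h := congrArg (fun D => D x) this
    simp only [Derivation.commutator_apply] at h
    rw [sub_eq_iff_eq_add'] at h
    simpa [sub_eq_add_neg] using h

lemma pderiv_weitz (i : ℕ) (hi : i < n + 1) (f : MvPolynomial (Fin (n + 1)) k) :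
    pderiv ⟨i, hi⟩ (weitz k n f) = weitz k n (pderiv ⟨i, hi⟩ f)
      + if h : i + 1 < n + 1 then pderiv ⟨i + 1, h⟩ f else 0 := by
  have : ⁅pderiv (R := k) (⟨i, hi⟩ : Fin (n + 1)), weitz k n⁆ = if h : i + 1 < n + 1 then pderiv ⟨i + 1, h⟩ else 0 := by
    apply derivation_ext
    rintro ⟨j, hj⟩
    rw [Derivation.commutator_apply]
    have h0 : weitz k n (pderiv ⟨i, hi⟩ (X ⟨j, hj⟩)) = 0 := by
      rw [pderiv_X]
      by_cases h : (⟨j, hj⟩ : Fin (n + 1)) = ⟨i, hi⟩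
      · simp [h]
      · simp [Pi.single_apply, h]
    rw [h0, sub_zero]
    cases j with
    | zero =>
      rw [weitz_X_zero]
      split_ifs with h
      · simp [pderiv_X, Pi.single_apply]
      · simp
    | succ j =>
      rw [weitz_X_succ]
      split_ifs with h
      · simp [pderiv_X, Pi.single_apply]
      · rw [pderiv_X_of_ne]
        · rfl
        · simp; omega
  have h := congrArg (fun D => D f) this
  simp only [Derivation.commutator_apply] at h
  rw [sub_eq_iff_eq_add'] at h
  rw [h]
  split_ifs <;> rfl

lemma comp_weitz (f : MvPolynomial (Fin (n + 1)) k) (m s : ℤ) :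
    weitz k n (weightedHomogeneousComponent (wt n) (m, s) f)
      = weightedHomogeneousComponent (wt n) (m, s - 1) (weitz k n f) := by
  classical
  conv_lhs => rw [f.as_sum]
  conv_rhs => rw [f.as_sum]
  simp only [map_sum]
  apply Finset.sum_congr rfl
  intro d _
  have hm := isWeightedHomogeneous_monomial (wt n) d (coeff d f) rfl
  obtain ⟨⟨m', s'⟩, hms⟩ : ∃ c, Finsupp.weight (wt n) d = c := ⟨_, rfl⟩
  rw [hms] at hm
  rw [weightedHomogeneousComponent_of_mem hm, weightedHomogeneousComponent_of_mem (weitz_wh hm)]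
  by_cases h : (m, s) = (m', s')
  · rw [if_pos h, if_pos]
    simp only [Prod.mk.injEq] at h ⊢
    omega
  · rw [if_neg h, if_neg, map_zero]
    simp only [Prod.mk.injEq] at h ⊢
    omega

end poly

section final
variable {k : Type*} [Field k] [CharZero k] {n : ℕ}

noncomputable def yy (k : Type*) [Field k] (n : ℕ) (l : ℕ) : MvPolynomial (Fin (n + 1)) k :=
  if h : l < n + 1 then X ⟨l, h⟩ else 0

noncomputable def phi (g : MvPolynomial (Fin (n + 1)) k) : MvPolynomial (Fin (n + 1)) k :=
  ∑ l ∈ Finset.range (n + 1), (-1 : k) ^ l • (yy k n l * ((weitz k n : Module.End k _) ^ l) g)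

lemma phi_add (f g : MvPolynomial (Fin (n + 1)) k) : phi (f + g) = phi f + phi g := by
  simp only [phi, map_add, mul_add, smul_add, Finset.sum_add_distrib]

lemma phi_smul (c : k) (g : MvPolynomial (Fin (n + 1)) k) : phi (c • g) = c • phi g := by
  simp only [phi, map_smul, mul_smul_comm, Finset.smul_sum]
  exact Finset.sum_congr rfl fun _ _ => smul_comm _ _ _

lemma phi_zero : phi (0 : MvPolynomial (Fin (n + 1)) k) = 0 := by
  simp [phi]

lemma phi_H {z : MvPolynomial (Fin (n + 1)) k} (hz : weitz k n z = 0) (r v : ℕ) (hr : r ≤ n)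
    (hw : ee k n z = ((r + v : ℕ) : k) • z) :
    phi (((dhat k n : Module.End k _) ^ r) z)
      = ((-1 : k) ^ r * r.factorial * (r + v).factorial / v.factorial) • tau k n (r + v) r hr z := by
  have hv : (v.factorial : k) ≠ 0 := by exact_mod_cast v.factorial_ne_zero
  have hrv : ((r + v).factorial : k) ≠ 0 := by exact_mod_cast (r + v).factorial_ne_zero
  have h0 : ((weitz k n : Module.End k _) ^ (r + 1)) (((dhat k n : Module.End k _) ^ r) z) = 0 := by
    have h := sl2_poly.coef hz 0 r v (by rw [zero_add]; exact hw)
    simp only [Nat.factorial_zero, one_mul, zero_add, pow_zero, Module.End.one_apply] at h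
    have h2 := congrArg (weitz k n : Module.End k _) h
    rw [map_smul, map_smul, Derivation.coeFn_coe] at h2
    rw [hz, smul_zero] at h2
    rw [pow_succ', Module.End.mul_apply]
    exact (smul_eq_zero.mp h2).resolve_left hv
  have hbig : ∀ l, r < l →
      ((weitz k n : Module.End k _) ^ l) (((dhat k n : Module.End k _) ^ r) z) = 0 := by
    intro l hl
    obtain ⟨t, rfl⟩ := Nat.exists_eq_add_of_lt hl
    rw [show r + t + 1 = t + (r + 1) by omega, pow_add, Module.End.mul_apply, h0, map_zero]
  rw [phi, ← Finset.sum_subset (s₁ := Finset.range (r + 1))]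
  · rw [tau, ← Finset.sum_range_reflect, Finset.smul_sum]
    apply Finset.sum_congr rfl
    intro j hj
    have hj' : j ≤ r := by simpa [Nat.lt_succ_iff] using hj
    obtain ⟨l, rfl⟩ := Nat.exists_eq_add_of_le hj'
    have h := sl2_poly.coef hz j l v hw
    have e1 : j + l + 1 - 1 - j = l := by omega
    have e2 : j + l - j = l := by omega
    have e3 : j + l + v - j = l + v := by omega
    have hy : yy k n l = X ⟨l, by omega⟩ := by rw [yy, dif_pos]
    simp only [e1, e2, e3]
    have hjf : (j.factorial : k) ≠ 0 := by exact_mod_cast j.factorial_ne_zero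
    have h' : ((weitz k n : Module.End k _) ^ l) (((dhat k n : Module.End k _) ^ (j + l)) z)
        = ((((j + l).factorial * (l + v).factorial : ℕ) : k) / ((j.factorial * v.factorial : ℕ) : k)) •
          ((dhat k n : Module.End k _) ^ j) z := by
      rw [div_eq_inv_mul, mul_smul, ← h, smul_smul, inv_mul_cancel₀, one_smul]
      push_cast
      exact mul_ne_zero hjf hv
    rw [h', hy, Module.End.pow_apply, mul_smul_comm, smul_smul, smul_smul]
    congr 1
    push_cast
    have hs : (-1 : k) ^ (j + l) * (-1) ^ j = (-1) ^ l := by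
      rw [pow_add, mul_right_comm, ← mul_pow]; simp
    rw [← hs]
    field_simp
  · intro a; simp; omega
  · intro l _ hl
    rw [hbig l (by simpa using hl), mul_zero, smul_zero]

lemma step (T : Subalgebra k (MvPolynomial (Fin (n + 1)) k))
    (hclosed : ∀ (z : MvPolynomial (Fin (n + 1)) k), z ∈ T → z ≠ 0 →
      ∀ m : ℕ, z.IsHomogeneous m → weitz k n z = 0 →
      ∀ w : ℕ, ee k n z = (w : k) • z →
      ∀ (i : ℕ) (hin : i ≤ n), i ≤ w → tau k n w i hin z ∈ T)
    (m : ℕ) (IH : ∀ (s : ℤ) (z : MvPolynomial (Fin (n + 1)) k),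
      IsWeightedHomogeneous (wt n) z ((m : ℤ), s) → weitz k n z = 0 → z ∈ T) (r : ℕ) :
    r ≤ n + 1 → ∀ (s : ℤ) (g : MvPolynomial (Fin (n + 1)) k),
      IsWeightedHomogeneous (wt n) g ((m : ℤ), s) →
      ((weitz k n : Module.End k _) ^ r) g = 0 → phi g ∈ T := by
  induction r with
  | zero =>
    intro _ s g _ h
    have : g = 0 := by simpa using h
    rw [this, phi_zero]; exact T.zero_mem
  | succ r ih =>
    intro hr s g hg h
    by_cases hz0 : ((weitz k n : Module.End k _) ^ r) g = 0
    · exact ih (by omega) s g hg hz0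
    obtain ⟨z, hzdef⟩ : ∃ z, z = ((weitz k n : Module.End k _) ^ r) g := ⟨_, rfl⟩
    have hzne : z ≠ 0 := by rwa [hzdef]
    have hzw : IsWeightedHomogeneous (wt n) z ((m : ℤ), s - r) := by
      rw [hzdef]; exact weitz_pow_wh hg r
    have hz : weitz k n z = 0 := by
      rw [pow_succ', Module.End.mul_apply, ← hzdef] at h; exact h
    have hu : -(r : ℤ) ≤ n * m - 2 * s := by
      by_contra hlt
      apply hz0
      rw [sl2_poly.inj dhat_nilp (r + 1) (n * m - 2 * s) g (by push_cast; omega) (ee_wh hg) h,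
        map_zero]
    obtain ⟨v, hv⟩ : ∃ v : ℕ, (n * m - 2 * s : ℤ) + r = v := ⟨_, (Int.toNat_of_nonneg (by omega)).symm⟩
    have hez : ee k n z = ((r + v : ℕ) : k) • z := by
      rw [ee_wh hzw, ← Int.cast_natCast (R := k) (r + v)]
      congr 2
      push_cast
      omega
    have hvf : (v.factorial : k) ≠ 0 := by exact_mod_cast v.factorial_ne_zero
    have hrf : (r.factorial : k) ≠ 0 := by exact_mod_cast r.factorial_ne_zero
    have hrvf : ((r + v).factorial : k) ≠ 0 := by exact_mod_cast (r + v).factorial_ne_zero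
    have hco := sl2_poly.coef hz 0 r v (by rw [zero_add]; exact hez)
    simp only [Nat.factorial_zero, one_mul, zero_add, pow_zero, Module.End.one_apply] at hco
    obtain ⟨c, hc⟩ : ∃ c : k, c = (v.factorial : k) / (r.factorial * (r + v).factorial) := ⟨_, rfl⟩
    have hH := dhat_pow_wh hzw r
    have hg' : g = (g + (-c) • ((dhat k n : Module.End k _) ^ r) z)
        + c • ((dhat k n : Module.End k _) ^ r) z := by
      rw [neg_smul]; abel
    rw [hg', phi_add]
    apply T.add_mem
    · apply ih (by omega) s
      · refine hg.add (wh_smul _ ?_)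
        convert hH using 2
        ring
      · rw [map_add, map_smul, ← hzdef, neg_smul, hc, div_eq_inv_mul, mul_smul, hco, smul_smul]
        push_cast
        rw [inv_mul_cancel₀ (mul_ne_zero hrf hrvf), one_smul, add_neg_cancel]
    · rw [phi_smul, phi_H hz r v (by omega) hez]
      apply T.smul_mem
      apply T.smul_mem
      exact hclosed z (IH _ z hzw hz) hzne m (wh_homog hzw) hz _ hez r _ (by omega)

lemma polar {f : MvPolynomial (Fin (n + 1)) k} (hf : weitz k n f = 0) (i : ℕ) (hi : i < n + 1) :
    ((weitz k n : Module.End k _) ^ i) (pderiv 0 f) = (-1 : k) ^ i • pderiv ⟨i, hi⟩ f := by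
  induction i with
  | zero => simp
  | succ i ih =>
    have h := pderiv_weitz i (by omega) f
    rw [hf, map_zero, dif_pos hi] at h
    rw [pow_succ', Module.End.mul_apply, ih (by omega), map_smul, pow_succ, mul_smul, neg_smul,
      one_smul, Derivation.coeFn_coe, eq_neg_of_add_eq_zero_left h.symm]

lemma polar_last {f : MvPolynomial (Fin (n + 1)) k} (hf : weitz k n f = 0) :
    ((weitz k n : Module.End k _) ^ (n + 1)) (pderiv 0 f) = 0 := by
  have h := pderiv_weitz n (by omega) f
  rw [hf, map_zero, dif_neg (by omega), add_zero] at h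
  rw [pow_succ', Module.End.mul_apply, polar hf n (by omega), map_smul, Derivation.coeFn_coe, ← h,
    smul_zero]

lemma main_wh (T : Subalgebra k (MvPolynomial (Fin (n + 1)) k))
    (hclosed : ∀ (z : MvPolynomial (Fin (n + 1)) k), z ∈ T → z ≠ 0 →
      ∀ m : ℕ, z.IsHomogeneous m → weitz k n z = 0 →
      ∀ w : ℕ, ee k n z = (w : k) • z →
      ∀ (i : ℕ) (hin : i ≤ n), i ≤ w → tau k n w i hin z ∈ T) (m : ℕ) :
    ∀ (s : ℤ) (f : MvPolynomial (Fin (n + 1)) k),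
      IsWeightedHomogeneous (wt n) f ((m : ℤ), s) → weitz k n f = 0 → f ∈ T := by
  induction m with
  | zero =>
    intro s f hf _
    have h : f.totalDegree = 0 := by
      rw [totalDegree_zero_iff_isHomogeneous]; exact wh_homog hf
    rw [totalDegree_eq_zero_iff_eq_C] at h
    rw [h]
    exact T.algebraMap_mem _
  | succ m ih =>
    intro s f hf hd
    have h1 := step T hclosed m ih (n + 1) le_rfl s (pderiv 0 f)
      (hf.pderiv (by simp [wt])) (polar_last hd)
    have h2 : phi (pderiv 0 f) = ((m + 1 : ℕ) : k) • f := by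
      rw [Nat.cast_smul_eq_nsmul, ← (wh_homog hf).sum_X_mul_pderiv, Finset.sum_fin_eq_sum_range, phi]
      apply Finset.sum_congr rfl
      intro l hl
      have hl' : l < n + 1 := by simpa using hl
      rw [dif_pos hl', polar hd l hl', yy, dif_pos hl', mul_smul_comm, smul_smul, ← mul_pow]
      simp
    rw [h2] at h1
    have h3 := T.smul_mem h1 (((m + 1 : ℕ) : k)⁻¹)
    rwa [smul_smul, inv_mul_cancel₀ (by exact_mod_cast Nat.succ_ne_zero m), one_smul] at h3

end final

/-- If `T` is a subalgebra of the kernel of the Weitzenböck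
derivation `d` containing `x_0` and closed under all the Casimir maps `τ_i`,
then `T` is the whole kernel: `f ∈ T ↔ d(f) = 0`. -/
theorem subalgebra_closed_under_tau_eq_kernel (k : Type*) [Field k] [CharZero k]
    (n : ℕ) (T : Subalgebra k (MvPolynomial (Fin (n + 1)) k))
    (hker : ∀ f ∈ T, weitz k n f = 0)
    (hx0 : (X 0 : MvPolynomial (Fin (n + 1)) k) ∈ T)
    (hclosed : ∀ (z : MvPolynomial (Fin (n + 1)) k), z ∈ T → z ≠ 0 →
      ∀ m : ℕ, z.IsHomogeneous m → weitz k n z = 0 →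
      ∀ w : ℕ, ee k n z = (w : k) • z →
      ∀ (i : ℕ) (hin : i ≤ n), i ≤ w → tau k n w i hin z ∈ T) :
    ∀ f : MvPolynomial (Fin (n + 1)) k, f ∈ T ↔ weitz k n f = 0 := by
  intro f
  refine ⟨hker f, fun hf => ?_⟩
  rw [← finsum_weightedHomogeneousComponent (wt n) f]
  refine finsum_induction (fun x => x ∈ T) T.zero_mem (fun _ _ => T.add_mem) ?_
  rintro ⟨m, s⟩
  have hw := weightedHomogeneousComponent_isWeightedHomogeneous (w := wt n) (m, s) f
  by_cases h0 : weightedHomogeneousComponent (wt n) (m, s) f = 0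
  · rw [h0]; exact T.zero_mem
  · obtain ⟨m', rfl⟩ := Int.eq_ofNat_of_zero_le (wh_bound hw h0).1
    refine main_wh T hclosed m' s _ hw ?_
    rw [comp_weitz, hf, map_zero]
end
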